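/- arXiv:2402.08619 — 3 statements merged into one kernel-verified Lean document; each statement's English description precedes it below -/
import Mathlib

section
/- Complementing basis chosen from a dense subspace: let X be a real normed space, let Y be a closed linear subspace of X such that the quotient X/Y has finite dimension p ≥ 1, and let D be a dense linear subspace of X. Then there exist elements a₁, …, a_p ∈ D such that Y ∩ span{a₁, …, a_p} = {0} and Y + span{a₁, …, a_p} = X; in particular a₁, …, a_p are linearly independent and span a complement of Y in X. -/
/-- Complementing basis chosen from a dense subspace: if `Y` is a closed subspace
of a real normed space `X` with `dim (X/Y) = p ≥ 1` and `D` is a dense subspace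
of `X`, then there exist `a₁, …, a_p ∈ D` which are linearly independent and
span an algebraic complement of `Y` in `X`. -/
theorem complement_basis_from_dense_subspace
    {X : Type*} [NormedAddCommGroup X] [NormedSpace ℝ X]
    (Y : Submodule ℝ X) (hY : IsClosed (Y : Set X))
    (p : ℕ) (hp : 1 ≤ p) (hcodim : Module.finrank ℝ (X ⧸ Y) = p)
    (D : Submodule ℝ X) (hD : Dense (D : Set X)) :
    ∃ a : Fin p → X, (∀ i, a i ∈ D) ∧ LinearIndependent ℝ a ∧
      Y ⊓ Submodule.span ℝ (Set.range a) = ⊥ ∧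
      Y ⊔ Submodule.span ℝ (Set.range a) = ⊤ := by
  have hfd : FiniteDimensional ℝ (X ⧸ Y) := FiniteDimensional.of_finrank_pos (by omega)
  have : IsClosed (Y : Set X) := hY
  have hcont : Continuous (Y.mkQ : X → X ⧸ Y) := continuous_quot_mk
  have hdense : Dense ((D.map Y.mkQ : Submodule ℝ (X ⧸ Y)) : Set (X ⧸ Y)) := by
    rw [Submodule.map_coe]
    exact (Submodule.mkQ_surjective Y).denseRange.dense_image hcont hD
  have : T3Space (X ⧸ Y) := Submodule.t3_quotient_of_isClosed Y
  have hclosed : IsClosed ((D.map Y.mkQ : Submodule ℝ (X ⧸ Y)) : Set (X ⧸ Y)) :=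
    Submodule.closed_of_finiteDimensional _
  have hall : ∀ z : X ⧸ Y, ∃ x ∈ D, Y.mkQ x = z := by
    intro z
    have hz : z ∈ ((D.map Y.mkQ : Submodule ℝ (X ⧸ Y)) : Set (X ⧸ Y)) := by
      rw [← hclosed.closure_eq, hdense.closure_eq]
      trivial
    exact hz
  let b := Module.finBasisOfFinrankEq ℝ (X ⧸ Y) hcodim
  choose a haD hab using fun i => hall (b i)
  have hsum : ∀ c : Fin p → ℝ, Y.mkQ (∑ i, c i • a i) = ∑ i, c i • b i := by
    intro c
    simp only [map_sum, map_smul, hab]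
  refine ⟨a, haD, ?_, ?_, ?_⟩
  · apply LinearIndependent.of_comp Y.mkQ
    have : (Y.mkQ : X → X ⧸ Y) ∘ a = b := funext hab
    rw [this]
    exact b.linearIndependent
  · rw [eq_bot_iff]
    rintro x ⟨hxY, hxs⟩
    obtain ⟨c, rfl⟩ := (Submodule.mem_span_range_iff_exists_fun ℝ).1 hxs
    have h0 : Y.mkQ (∑ i, c i • a i) = 0 := by
      simpa only [Submodule.mkQ_apply, Submodule.Quotient.mk_eq_zero, SetLike.mem_coe] using hxY
    rw [hsum] at h0
    have hc := Fintype.linearIndependent_iff.1 b.linearIndependent c h0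
    simp [hc]
  · rw [eq_top_iff]
    intro x _
    have hx : Y.mkQ (x - ∑ i, b.repr (Y.mkQ x) i • a i) = 0 := by
      rw [map_sub, hsum, b.sum_repr, sub_self]
    have hxY : x - ∑ i, b.repr (Y.mkQ x) i • a i ∈ Y := by
      simpa only [Submodule.mkQ_apply, Submodule.Quotient.mk_eq_zero] using hx
    exact Submodule.mem_sup.2 ⟨_, hxY, _,
      (Submodule.mem_span_range_iff_exists_fun ℝ).2 ⟨_, rfl⟩, sub_add_cancel _ _⟩
end

section
/- Unique continuation for second-order Hessian systems in Euclidean space: let n ≥ 1 and let Ω ⊆ ℝⁿ be a nonempty open connected set. Let u : ℝⁿ → ℝ be twice continuously differentiable on Ω, and let A assign to each x ∈ Ω a continuous bilinear form A(x) on ℝⁿ, depending continuously on x ∈ Ω. Assume that the Hessian of u satisfies D²u(x)(v, w) = u(x) · A(x)(v, w) for all x ∈ Ω and all v, w ∈ ℝⁿ. If there exists a point p ∈ Ω with u(p) = 0 and Du(p) = 0, then u vanishes identically on Ω. -/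
/-- Unique continuation for second-order Hessian systems in Euclidean space:
if `u` is `C²` on a nonempty open connected set `Ω ⊆ ℝⁿ` and its Hessian
satisfies `D²u(x)(v,w) = u(x) · A(x)(v,w)` on `Ω` for a continuous family of
continuous bilinear forms `A`, and the 1-jet of `u` vanishes at some `p ∈ Ω`,
then `u ≡ 0` on `Ω`. -/
theorem unique_continuation_hessian_system
    {n : ℕ} (hn : 1 ≤ n) (Ω : Set (EuclideanSpace ℝ (Fin n)))
    (hΩopen : IsOpen Ω) (hΩconn : IsConnected Ω)
    (u : EuclideanSpace ℝ (Fin n) → ℝ)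
    (hu : ContDiffOn ℝ 2 u Ω)
    (A : EuclideanSpace ℝ (Fin n) →
      (EuclideanSpace ℝ (Fin n) →L[ℝ] EuclideanSpace ℝ (Fin n) →L[ℝ] ℝ))
    (hA : ContinuousOn A Ω)
    (hHess : ∀ x ∈ Ω, ∀ v w : EuclideanSpace ℝ (Fin n),
      fderiv ℝ (fderiv ℝ u) x v w = u x * A x v w)
    (p : EuclideanSpace ℝ (Fin n)) (hp : p ∈ Ω)
    (hup : u p = 0) (hDup : fderiv ℝ u p = 0) :
    ∀ x ∈ Ω, u x = 0 := by
  classical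
  let F : EuclideanSpace ℝ (Fin n) → ℝ × (EuclideanSpace ℝ (Fin n) →L[ℝ] ℝ) :=
    fun x => (u x, fderiv ℝ u x)
  have hF : ∀ x ∈ Ω, HasFDerivAt F ((fderiv ℝ u x).prod (fderiv ℝ (fderiv ℝ u) x)) x := by
    intro x hx
    have h1 : ContDiffAt ℝ 2 u x := hu.contDiffAt (hΩopen.mem_nhds hx)
    have h2 : DifferentiableAt ℝ u x := h1.differentiableAt (by norm_num)
    have h3 : DifferentiableAt ℝ (fderiv ℝ u) x :=
      (h1.fderiv_right (m := 1) (by norm_num)).differentiableAt (by norm_num)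
    exact h2.hasFDerivAt.prodMk h3.hasFDerivAt
  have hloc : ∀ x ∈ Ω, ∃ r > 0, Metric.ball x r ⊆ Ω ∧ ∀ z ∈ Metric.ball x r, F z = 0 →
      ∀ y ∈ Metric.ball x r, F y = 0 := by
    intro x hx
    have hAx : ContinuousAt A x := hA.continuousAt (hΩopen.mem_nhds hx)
    have h1 : ∀ᶠ y in nhds x, ‖A y‖ < ‖A x‖ + 1 := by
      filter_upwards [(Metric.continuousAt_iff' (f := A) (b := x)).1 hAx 1 one_pos] with y hy
      rw [dist_eq_norm (A y) (A x)] at hy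
      have h := norm_sub_norm_le (A y) (A x)
      linarith
    obtain ⟨r, hr, hb⟩ := Metric.eventually_nhds_iff_ball.1 (h1.and (hΩopen.mem_nhds hx))
    refine ⟨r, hr, fun y hy => (hb y hy).2, ?_⟩
    intro z hz hFz y hy
    have hseg : ∀ t ∈ Set.Icc (0:ℝ) 1, z + t • (y - z) ∈ Metric.ball x r := by
      intro t ht
      exact (convex_ball x r).add_smul_sub_mem hz hy ht
    have hd : ∀ t ∈ Set.Icc (0:ℝ) 1, HasDerivAt (fun t : ℝ => F (z + t • (y - z)))
        (((fderiv ℝ u (z + t • (y - z))).prod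
          (fderiv ℝ (fderiv ℝ u) (z + t • (y - z)))) (y - z)) t := by
      intro t ht
      have hl : HasDerivAt (fun t : ℝ => z + t • (y - z)) (y - z) t := by
        simpa using ((hasDerivAt_id t).smul_const (y - z)).const_add z
      exact (hF _ (hb _ (hseg t ht)).2).comp_hasDerivAt t hl
    have key := eq_zero_of_abs_deriv_le_mul_abs_self_of_eq_zero_right
      (f := fun t : ℝ => F (z + t • (y - z))) (K := (‖A x‖ + 1) * ‖y - z‖) (a := 0) (b := 1)
      (fun t ht => (hd t ht).continuousAt.continuousWithinAt)
      (fun t ht => (hd t ⟨ht.1, ht.2.le⟩).hasDerivWithinAt)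
      (by simpa using hFz) ?_ 1 (by simp)
    · simpa using key
    · intro t ht
      have hm := hb _ (hseg t ⟨ht.1, ht.2.le⟩)
      generalize z + t • (y - z) = q at hm
      generalize y - z = v
      have e : fderiv ℝ (fderiv ℝ u) q v = u q • A q v := by
        ext w
        simpa using hHess q hm.2 v w
      have hFu : ‖u q‖ ≤ ‖F q‖ := norm_fst_le (F q)
      have hFd : ‖fderiv ℝ u q‖ ≤ ‖F q‖ := norm_snd_le (F q)
      rw [ContinuousLinearMap.prod_apply, e, norm_prod_le_iff]
      constructor
      · calc ‖fderiv ℝ u q v‖ ≤ ‖fderiv ℝ u q‖ * ‖v‖ := ContinuousLinearMap.le_opNorm _ _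
          _ ≤ ‖F q‖ * ‖v‖ := by gcongr
          _ ≤ (‖A x‖ + 1) * ‖v‖ * ‖F q‖ := by
            nlinarith [mul_nonneg (norm_nonneg (A x)) (mul_nonneg (norm_nonneg v)
              (norm_nonneg (F q)))]
      · calc ‖u q • A q v‖ = ‖u q‖ * ‖A q v‖ := norm_smul _ _
          _ ≤ ‖F q‖ * (‖A q‖ * ‖v‖) := by
            gcongr
            exact ContinuousLinearMap.le_opNorm _ _
          _ ≤ ‖F q‖ * ((‖A x‖ + 1) * ‖v‖) := by
            gcongr
            exact hm.1.le
          _ = (‖A x‖ + 1) * ‖v‖ * ‖F q‖ := by ring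
  have hsub : Ω ⊆ interior {x | F x = 0} := by
    have hmem : ∀ x ∈ Ω, ∀ r > 0, (∀ y ∈ Metric.ball x r, F y = 0) →
        x ∈ interior {x | F x = 0} := fun x _ r hr h =>
      mem_interior.2 ⟨Metric.ball x r, h, Metric.isOpen_ball, Metric.mem_ball_self hr⟩
    apply hΩconn.isPreconnected.subset_of_closure_inter_subset isOpen_interior
    · obtain ⟨r, hr, -, h⟩ := hloc p hp
      exact ⟨p, hp, hmem p hp r hr (h p (Metric.mem_ball_self hr) (by simp [F, hup, hDup]))⟩
    · rintro x ⟨hxc, hx⟩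
      obtain ⟨r, hr, -, h⟩ := hloc x hx
      obtain ⟨z, hz, hz'⟩ := mem_closure_iff.1 hxc _ Metric.isOpen_ball (Metric.mem_ball_self hr)
      exact hmem x hx r hr (h z hz (interior_subset (s := {x | F x = 0}) hz'))
  intro x hx
  exact congrArg Prod.fst (interior_subset (s := {x | F x = 0}) (hsub hx) : F x = 0)
end

section
/- Dimension bound for Hessian systems in Euclidean space: let n ≥ 1 and let Ω ⊆ ℝⁿ be a nonempty open connected set, and let A assign to each x ∈ Ω a continuous bilinear form A(x) on ℝⁿ, depending continuously on x ∈ Ω. Then any n + 2 functions u₀, …, u_{n+1} : ℝⁿ → ℝ, each twice continuously differentiable on Ω and each satisfying D²uᵢ(x)(v, w) = uᵢ(x) · A(x)(v, w) for all x ∈ Ω and v, w ∈ ℝⁿ, are linearly dependent on Ω: there exist real numbers c₀, …, c_{n+1}, not all zero, such that c₀u₀(x) + ⋯ + c_{n+1}u_{n+1}(x) = 0 for all x ∈ Ω. -/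
open Set Filter Topology in
theorem aux_unique {E G : Type*} [NormedAddCommGroup E] [NormedSpace ℝ E]
    [NormedAddCommGroup G] [NormedSpace ℝ G] (Ω : Set E) (ho : IsOpen Ω) (hc : IsPreconnected Ω)
    (F : E → G) (F' : E → E →L[ℝ] G) (hF : ∀ x ∈ Ω, HasFDerivAt F (F' x) x)
    (hK : ∀ x ∈ Ω, ∃ K : ℝ, ∀ᶠ y in 𝓝 x, ‖F' y‖ ≤ K * ‖F y‖)
    (p : E) (hp : p ∈ Ω) (hp0 : F p = 0) : ∀ x ∈ Ω, F x = 0 := by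
  have key : Ω ⊆ {x | x ∈ Ω ∧ F x = 0} := by
    apply hc.subset_of_closure_inter_subset
    · rw [isOpen_iff_mem_nhds]
      rintro x ⟨hx, hx0⟩
      obtain ⟨K, hK⟩ := hK x hx
      obtain ⟨ε, hε, h⟩ := Metric.eventually_nhds_iff_ball.mp (hK.and (ho.mem_nhds hx))
      filter_upwards [Metric.ball_mem_nhds x hε] with y hy
      refine ⟨(h y hy).2, ?_⟩
      have hmem : ∀ t ∈ Icc (0:ℝ) 1, x + t • (y - x) ∈ Metric.ball x ε := by
        intro t ht
        exact (convex_ball x ε).add_smul_sub_mem (Metric.mem_ball_self hε) hy ht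
      have hd : ∀ t ∈ Icc (0:ℝ) 1, HasDerivAt (fun t : ℝ => F (x + t • (y - x)))
          (F' (x + t • (y - x)) (y - x)) t := by
        intro t ht
        have h1 : HasDerivAt (fun t : ℝ => x + t • (y - x)) (y - x) t := by
          simpa using ((hasDerivAt_id t).smul_const (y - x)).const_add x
        exact (hF _ (h _ (hmem t ht)).2).comp_hasDerivAt t h1
      have := eq_zero_of_abs_deriv_le_mul_abs_self_of_eq_zero_right
        (f := fun t : ℝ => F (x + t • (y - x))) (f' := fun t => F' (x + t • (y - x)) (y - x))
        (K := K * ‖y - x‖) (a := 0) (b := 1)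
        (fun t ht => (hd t ht).continuousAt.continuousWithinAt)
        (fun t ht => (hd t (Ico_subset_Icc_self ht)).hasDerivWithinAt)
        (by simpa using hx0)
        (fun t ht => by
          have h2 := (h _ (hmem t (Ico_subset_Icc_self ht))).1
          calc _ ≤ ‖F' (x + t • (y - x))‖ * ‖y - x‖ := ContinuousLinearMap.le_opNorm _ _
            _ ≤ (K * ‖F (x + t • (y - x))‖) * ‖y - x‖ := by gcongr
            _ = _ := by ring) 1 (by simp)
      simpa using this
    · exact ⟨p, hp, hp, hp0⟩
    · rintro x ⟨hx, hxΩ⟩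
      refine ⟨hxΩ, ?_⟩
      have hcx : Tendsto F (𝓝[{x | x ∈ Ω ∧ F x = 0}] x) (𝓝 (F x)) :=
        (hF x hxΩ).continuousAt.continuousWithinAt
      have : (𝓝[{x | x ∈ Ω ∧ F x = 0}] x).NeBot := mem_closure_iff_nhdsWithin_neBot.mp hx
      refine tendsto_nhds_unique hcx (tendsto_const_nhds.congr' ?_)
      filter_upwards [self_mem_nhdsWithin] with y hy using hy.2.symm
  exact fun x hx => (key hx).2

theorem aux_bound {E : Type*} [NormedAddCommGroup E] [InnerProductSpace ℝ E]
    [FiniteDimensional ℝ E] {n : ℕ} (hfin : Module.finrank ℝ E = n) (Ω : Set E)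
    (hΩopen : IsOpen Ω) (hΩconn : IsConnected Ω)
    (A : E → (E →L[ℝ] E →L[ℝ] ℝ))
    (hA : ContinuousOn A Ω)
    (u : Fin (n + 2) → E → ℝ)
    (hu : ∀ i, ContDiffOn ℝ 2 (u i) Ω)
    (hHess : ∀ i, ∀ x ∈ Ω, ∀ v w : E,
      fderiv ℝ (fderiv ℝ (u i)) x v w = u i x * A x v w) :
    ∃ c : Fin (n + 2) → ℝ, c ≠ 0 ∧
      ∀ x ∈ Ω, ∑ i, c i * u i x = 0 := by
  obtain ⟨p, hp⟩ := hΩconn.nonempty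
  let L : (Fin (n + 2) → ℝ) →ₗ[ℝ] ℝ × E :=
    Fintype.linearCombination ℝ
      (fun i => (u i p, (InnerProductSpace.toDual ℝ _).symm (fderiv ℝ (u i) p)))
  have hker : LinearMap.ker L ≠ ⊥ := by
    apply LinearMap.ker_ne_bot_of_finrank_lt
    simp [hfin]
    omega
  obtain ⟨c, hc, hc0⟩ := (Submodule.ne_bot_iff _).mp hker
  rw [LinearMap.mem_ker, Fintype.linearCombination_apply] at hc
  have hc1 : ∑ i, c i * u i p = 0 := by
    simpa [Prod.fst_sum] using congrArg Prod.fst hc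
  have hc2 : ∑ i, c i • fderiv ℝ (u i) p = 0 := by
    have h := congrArg (InnerProductSpace.toDual ℝ _) (congrArg Prod.snd hc)
    simpa [Prod.snd_sum] using h
  refine ⟨c, hc0, ?_⟩
  have hd1 : ∀ i, ∀ x ∈ Ω, HasFDerivAt (u i) (fderiv ℝ (u i) x) x := fun i x hx =>
    (((hu i).contDiffAt (hΩopen.mem_nhds hx)).differentiableAt (by norm_num)).hasFDerivAt
  have hd2 : ∀ i, ∀ x ∈ Ω, HasFDerivAt (fderiv ℝ (u i)) (u i x • A x) x := fun i x hx => by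
    have h1 : ContDiffAt ℝ 1 (fderiv ℝ (u i)) x :=
      ((hu i).contDiffAt (hΩopen.mem_nhds hx)).fderiv_right (by norm_num)
    have h2 := (h1.differentiableAt (by norm_num)).hasFDerivAt
    have h3 : fderiv ℝ (fderiv ℝ (u i)) x = u i x • A x := by
      ext v w
      simp [hHess i x hx v w]
    rwa [h3] at h2
  have main := aux_unique Ω hΩopen hΩconn.isPreconnected
    (fun x => (∑ i, c i * u i x, ∑ i, c i • fderiv ℝ (u i) x))
    (fun x => (∑ i, c i • fderiv ℝ (u i) x).prod ((∑ i, c i * u i x) • A x))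
    (fun x hx => by
      refine HasFDerivAt.prodMk ?_ ?_
      · exact HasFDerivAt.fun_sum fun i _ => (hd1 i x hx).const_mul (c i)
      · have := HasFDerivAt.fun_sum (u := Finset.univ) fun i _ => (hd2 i x hx).const_smul (c i)
        have h4 : (∑ i, c i * u i x) • A x = ∑ i, c i • u i x • A x := by
          ext v w
          simp [Finset.sum_mul, ContinuousLinearMap.sum_apply, mul_assoc]
        rw [h4]
        exact this)
    (fun x hx => by
      refine ⟨max 1 (‖A x‖ + 1), ?_⟩
      have hcA : Filter.Tendsto (fun y => ‖A y‖) (nhds x) (nhds ‖A x‖) :=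
        (continuous_norm (E := E →L[ℝ] E →L[ℝ] ℝ)).continuousAt.tendsto.comp
          (hA.continuousAt (hΩopen.mem_nhds hx))
      filter_upwards [hcA.eventually_lt_const (lt_add_one ‖A x‖)] with y hy
      rw [ContinuousLinearMap.opNorm_prod, Prod.norm_def, Prod.norm_def]
      simp only
      apply max_le
      · calc _ ≤ max ‖∑ i, c i * u i y‖ ‖∑ i, c i • fderiv ℝ (u i) y‖ := le_max_right _ _
          _ ≤ _ := le_mul_of_one_le_left (by positivity) (le_max_left _ _)
      · rw [norm_smul, mul_comm]
        exact mul_le_mul (hy.le.trans (le_max_right _ _)) (le_max_left _ _) (norm_nonneg _)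
          (by positivity))
    p hp (by simp only [hc1, hc2]; rfl)
  exact fun x hx => congrArg Prod.fst (main x hx)

/-- Dimension bound for Hessian systems in Euclidean space: on a nonempty open
connected set `Ω ⊆ ℝⁿ`, any `n + 2` functions that are `C²` on `Ω` and satisfy
`D²uᵢ(x)(v,w) = uᵢ(x) · A(x)(v,w)` for a continuous family of continuous
bilinear forms `A` are linearly dependent on `Ω`. -/
theorem hessian_system_dimension_bound
    {n : ℕ} (hn : 1 ≤ n) (Ω : Set (EuclideanSpace ℝ (Fin n)))
    (hΩopen : IsOpen Ω) (hΩconn : IsConnected Ω)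
    (A : EuclideanSpace ℝ (Fin n) →
      (EuclideanSpace ℝ (Fin n) →L[ℝ] EuclideanSpace ℝ (Fin n) →L[ℝ] ℝ))
    (hA : ContinuousOn A Ω)
    (u : Fin (n + 2) → EuclideanSpace ℝ (Fin n) → ℝ)
    (hu : ∀ i, ContDiffOn ℝ 2 (u i) Ω)
    (hHess : ∀ i, ∀ x ∈ Ω, ∀ v w : EuclideanSpace ℝ (Fin n),
      fderiv ℝ (fderiv ℝ (u i)) x v w = u i x * A x v w) :
    ∃ c : Fin (n + 2) → ℝ, c ≠ 0 ∧
      ∀ x ∈ Ω, ∑ i, c i * u i x = 0 := by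
  exact aux_bound (by simp) Ω hΩopen hΩconn A hA u hu hHess
end
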